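/- Let C ∈ RH∞^{n×n} be real-rational and suppose that the positive feedback interconnection [P,C] is stable for every strictly proper negative imaginary (NI) P ∈ R^{n×n} that has no double pole at the origin. Then for each ω ∈ (0,∞) there exists ε > 0 (depending on ω) such that j(C(jω) − C(jω)*) ≥ ε C(jω)* C(jω). -/

import Mathlib

open Matrix Polynomial Filter Topology
open scoped ComplexOrder

noncomputable section

namespace NIControl

/-- Evaluate a real-rational function at a complex point (junk value at poles). -/
def evalC (f : RatFunc ℝ) (s : ℂ) : ℂ :=
  f.eval (algebraMap ℝ ℂ) s

/-- `s` is a pole of the real-rational function `f`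
(the reduced denominator vanishes at `s`). -/
def IsPoleAt (f : RatFunc ℝ) (s : ℂ) : Prop :=
  f.denom.eval₂ (algebraMap ℝ ℂ) s = 0

variable {n : ℕ}

/-- Pointwise evaluation of a real-rational transfer matrix at a complex point. -/
def evalM (G : Matrix (Fin n) (Fin n) (RatFunc ℝ)) (s : ℂ) : Matrix (Fin n) (Fin n) ℂ :=
  Matrix.of fun i j => evalC (G i j) s

/-- Pointwise evaluation of a real-rational transfer matrix at a real point. -/
def evalR (G : Matrix (Fin n) (Fin n) (RatFunc ℝ)) (x : ℝ) : Matrix (Fin n) (Fin n) ℝ :=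
  Matrix.of fun i j => (G i j).eval (RingHom.id ℝ) x

/-- Value at `s = ∞` of a proper real-rational function. -/
def atInfinity (f : RatFunc ℝ) : ℝ :=
  if f.num.degree = f.denom.degree then f.num.leadingCoeff / f.denom.leadingCoeff else 0

/-- The instantaneous gain `G(∞)` of a proper real-rational transfer matrix. -/
def evalInf (G : Matrix (Fin n) (Fin n) (RatFunc ℝ)) : Matrix (Fin n) (Fin n) ℝ :=
  Matrix.of fun i j => atInfinity (G i j)

/-- The matrix `G` has a pole at `s`. -/
def HasPole (G : Matrix (Fin n) (Fin n) (RatFunc ℝ)) (s : ℂ) : Prop :=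
  ∃ i j, IsPoleAt (G i j) s

/-- All entries of `G` are proper rational functions. -/
def Proper (G : Matrix (Fin n) (Fin n) (RatFunc ℝ)) : Prop :=
  ∀ i j, (G i j).num.degree ≤ (G i j).denom.degree

/-- All entries of `G` are strictly proper rational functions. -/
def StrictlyProper (G : Matrix (Fin n) (Fin n) (RatFunc ℝ)) : Prop :=
  ∀ i j, (G i j).num.degree < (G i j).denom.degree

/-- The pole of `G` at the origin (if any) is at most simple. -/
def NoDoubleOriginPole (G : Matrix (Fin n) (Fin n) (RatFunc ℝ)) : Prop :=
  ∀ i j, (G i j).denom.rootMultiplicity 0 ≤ 1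

/-- Membership in `RH∞`: proper and no poles in the closed right-half complex plane. -/
def MemRHinf {m : Type*} [Fintype m] (G : Matrix m m (RatFunc ℝ)) : Prop :=
  (∀ i j, (G i j).num.degree ≤ (G i j).denom.degree) ∧
  ∀ s : ℂ, 0 ≤ s.re → ∀ i j, ¬ IsPoleAt (G i j) s

/-- The point `jω` on the imaginary axis. -/
def jw (ω : ℝ) : ℂ := Complex.I * (ω : ℂ)

/-- The negative-imaginary frequency kernel `j (M − M*)`. -/
def niKer (M : Matrix (Fin n) (Fin n) ℂ) : Matrix (Fin n) (Fin n) ℂ :=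
  Complex.I • (M - Mᴴ)

/-- Negative imaginary (NI) real-rational transfer matrix. -/
def IsNI (G : Matrix (Fin n) (Fin n) (RatFunc ℝ)) : Prop :=
  Proper G ∧
  (∀ s : ℂ, 0 < s.re → ¬ HasPole G s) ∧
  (∀ ω : ℝ, 0 < ω → ¬ HasPole G (jw ω) → (niKer (evalM G (jw ω))).PosSemidef) ∧
  (∀ ω : ℝ, 0 < ω → HasPole G (jw ω) →
    ∃ R : Matrix (Fin n) (Fin n) ℂ, R.PosSemidef ∧
      Tendsto (fun s : ℂ => (s - jw ω) • Complex.I • evalM G s) (𝓝[≠] jw ω) (𝓝 R)) ∧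
  (HasPole G 0 →
    (∀ k : ℕ, 3 ≤ k → Tendsto (fun s : ℂ => s ^ k • evalM G s) (𝓝[≠] 0) (𝓝 0)) ∧
    ∃ R : Matrix (Fin n) (Fin n) ℂ, R.PosSemidef ∧
      Tendsto (fun s : ℂ => s ^ 2 • evalM G s) (𝓝[≠] 0) (𝓝 R))

/-- Strictly negative imaginary (SNI) real-rational transfer matrix. -/
def IsSNI (G : Matrix (Fin n) (Fin n) (RatFunc ℝ)) : Prop :=
  MemRHinf G ∧ ∀ ω : ℝ, 0 < ω → (niKer (evalM G (jw ω))).PosDef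

/-- Positive real (passive) real-rational transfer matrix. -/
def IsPositiveReal (G : Matrix (Fin n) (Fin n) (RatFunc ℝ)) : Prop :=
  MemRHinf G ∧ ∀ ω : ℝ, 0 ≤ ω → (evalM G (jw ω) + (evalM G (jw ω))ᴴ).PosSemidef

/-- Output strictly passive real-rational transfer matrix. -/
def IsOSP (G : Matrix (Fin n) (Fin n) (RatFunc ℝ)) : Prop :=
  MemRHinf G ∧ ∃ ε : ℝ, 0 < ε ∧ ∀ ω : ℝ, 0 ≤ ω →
    (evalM G (jw ω) + (evalM G (jw ω))ᴴ -
      (ε : ℂ) • ((evalM G (jw ω))ᴴ * evalM G (jw ω))).PosSemidef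

/-- Stability of the positive feedback interconnection `[P, C]`:
`[I; C] (I − P C)⁻¹ [I, P] ∈ RH∞`. -/
def FeedbackStable (P C : Matrix (Fin n) (Fin n) (RatFunc ℝ)) : Prop :=
  ((1 : Matrix (Fin n) (Fin n) (RatFunc ℝ)) - P * C).det ≠ 0 ∧
  MemRHinf (Matrix.fromBlocks
    (1 - P * C)⁻¹ ((1 - P * C)⁻¹ * P)
    (C * (1 - P * C)⁻¹) (C * (1 - P * C)⁻¹ * P))

/-- All eigenvalues of the complex matrix `M` are real and less than `c`. -/
def eigsRealAndLT (M : Matrix (Fin n) (Fin n) ℂ) (c : ℝ) : Prop :=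
  ∀ μ ∈ spectrum ℂ M, μ.im = 0 ∧ μ.re < c

/-- The (real) eigenvalues of the real matrix `M` are all real and its largest
eigenvalue is less than `c`. -/
def maxEigLT (M : Matrix (Fin n) (Fin n) ℝ) (c : ℝ) : Prop :=
  eigsRealAndLT (M.map (Complex.ofReal)) c

/-- Loewner order `A ≤ B` on real matrices. -/
def LoewnerLE (A B : Matrix (Fin n) (Fin n) ℝ) : Prop := (B - A).PosSemidef

/-- Strict Loewner order `A < B` on real matrices. -/
def LoewnerLT (A B : Matrix (Fin n) (Fin n) ℝ) : Prop := (B - A).PosDef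

theorem exists_shift {n : ℕ} (A : Matrix (Fin n) (Fin n) ℂ) (hA : A.IsHermitian) :
    ∃ l : ℝ, 1 ≤ l ∧ (A + (l : ℂ) • (1 : Matrix (Fin n) (Fin n) ℂ)).PosSemidef := by
  refine ⟨1 + ∑ i, |hA.eigenvalues i|, ?_, ?_⟩
  · have : 0 ≤ ∑ i, |hA.eigenvalues i| := Finset.sum_nonneg fun i _ => abs_nonneg _
    linarith
  set l : ℝ := 1 + ∑ i, |hA.eigenvalues i| with hl
  have key : A + (l : ℂ) • (1 : Matrix (Fin n) (Fin n) ℂ) =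
      (hA.eigenvectorUnitary : Matrix (Fin n) (Fin n) ℂ) *
      (diagonal (RCLike.ofReal ∘ hA.eigenvalues) + (l : ℂ) • 1) *
      (hA.eigenvectorUnitary : Matrix (Fin n) (Fin n) ℂ)ᴴ := by
    have h1 := hA.spectral_theorem
    rw [Unitary.conjStarAlgAut_apply] at h1
    have h2 : (hA.eigenvectorUnitary : Matrix (Fin n) (Fin n) ℂ) *
      (hA.eigenvectorUnitary : Matrix (Fin n) (Fin n) ℂ)ᴴ = 1 :=
      Unitary.mul_star_self_of_mem hA.eigenvectorUnitary.2
    rw [mul_add, add_mul, mul_smul_comm, smul_mul_assoc, mul_one, h2]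
    congr 1
  rw [key]
  apply PosSemidef.mul_mul_conjTranspose_same
  rw [← diagonal_one, ← diagonal_smul, diagonal_add]
  apply PosSemidef.diagonal
  intro i
  have h3 : |hA.eigenvalues i| ≤ ∑ i, |hA.eigenvalues i| :=
    Finset.single_le_sum (f := fun i => |hA.eigenvalues i|) (fun i _ => abs_nonneg _) (Finset.mem_univ i)
  have h4 : 0 ≤ hA.eigenvalues i + l := by
    have := neg_abs_le (hA.eigenvalues i)
    linarith
  simp only [Pi.zero_apply, Function.comp, Pi.smul_apply, smul_eq_mul, mul_one]
  have h5 : (0:ℂ) ≤ ((hA.eigenvalues i + l : ℝ) : ℂ) := by exact_mod_cast h4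
  rw [Complex.ofReal_add] at h5
  exact h5

theorem exists_factor {n : ℕ} (B M : Matrix (Fin n) (Fin n) ℂ) (h : ∀ x, B *ᵥ x = 0 → M *ᵥ x = 0) :
    ∃ L : Matrix (Fin n) (Fin n) ℂ, M = L * B := by
  have hk : LinearMap.ker (toLin' B) ≤ LinearMap.ker (toLin' M) := by
    intro x hx
    simp only [LinearMap.mem_ker, toLin'_apply] at hx ⊢
    exact h x hx
  let f := ((LinearMap.ker (toLin' B)).liftQ (toLin' M) hk) ∘ₗ
    (toLin' B).quotKerEquivRange.symm.toLinearMap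
  obtain ⟨g, hg⟩ := LinearMap.exists_extend f
  refine ⟨LinearMap.toMatrix' g, ?_⟩
  apply (toLin' (R := ℂ)).injective
  rw [toLin'_mul, toLin'_toMatrix']
  apply LinearMap.ext
  intro x
  have := LinearMap.congr_fun hg ⟨toLin' B x, LinearMap.mem_range_self _ _⟩
  have e : (toLin' B).quotKerEquivRange.symm ⟨toLin' B x, LinearMap.mem_range_self _ _⟩ =
     (LinearMap.ker (toLin' B)).mkQ x := (toLin' B).quotKerEquivRange_symm_apply_image x _
  simp only [f, LinearMap.comp_apply, LinearEquiv.coe_coe, e] at this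
  simpa using this.symm

open scoped MatrixOrder in
theorem exists_gram {n : ℕ} (A : Matrix (Fin n) (Fin n) ℂ) (hA : A.PosSemidef) :
    ∃ B : Matrix (Fin n) (Fin n) ℂ, A = Bᴴ * B :=
  CStarAlgebra.nonneg_iff_eq_star_mul_self.mp hA.nonneg

/-- The linear-algebra criterion. -/
theorem exists_eps {n : ℕ} (M : Matrix (Fin n) (Fin n) ℂ)
    (h : ∀ x, M *ᵥ x ≠ 0 → (star x ⬝ᵥ (M *ᵥ x)).im < 0) :
    ∃ ε : ℝ, 0 < ε ∧ (Complex.I • (M - Mᴴ) - (ε : ℂ) • (Mᴴ * M)).PosSemidef := by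
  have hform : ∀ x, star x ⬝ᵥ ((Complex.I • (M - Mᴴ)) *ᵥ x) =
      ((-2 * (star x ⬝ᵥ (M *ᵥ x)).im : ℝ) : ℂ) := by
    intro x
    have e1 : star x ⬝ᵥ (Mᴴ *ᵥ x) = star (star x ⬝ᵥ (M *ᵥ x)) := by
      rw [star_dotProduct, star_mulVec, conjTranspose_conjTranspose, ← dotProduct_mulVec]
    rw [smul_mulVec, sub_mulVec, dotProduct_smul, dotProduct_sub, e1]
    apply Complex.ext <;> simp <;> ring
  have hH : (Complex.I • (M - Mᴴ)).PosSemidef := by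
    apply PosSemidef.of_dotProduct_mulVec_nonneg
    · unfold IsHermitian
      rw [conjTranspose_smul, conjTranspose_sub, conjTranspose_conjTranspose]
      simp [sub_eq_add_neg, add_comm]
    · intro x
      rw [hform]
      by_cases hx : M *ᵥ x = 0
      · simp [hx]
      · have := h x hx
        exact_mod_cast (by linarith : 0 ≤ -2 * (star x ⬝ᵥ (M *ᵥ x)).im)
  obtain ⟨B, hB⟩ := exists_gram _ hH
  obtain ⟨L, hL⟩ := exists_factor B M (by
    intro x hx
    by_contra hne
    have h1 := h x hne
    have h2 := hform x
    rw [hB, ← mulVec_mulVec, hx] at h2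
    simp at h2
    linarith)
  obtain ⟨l, hl, hP⟩ := exists_shift (-(Lᴴ * L)) (isHermitian_conjTranspose_mul_self L).neg
  refine ⟨l⁻¹, by positivity, ?_⟩
  have e : Complex.I • (M - Mᴴ) - ((l⁻¹ : ℝ) : ℂ) • (Mᴴ * M) =
      (l⁻¹ : ℝ) • (Bᴴ * (-(Lᴴ * L) + (l : ℂ) • (1 : Matrix (Fin n) (Fin n) ℂ)) * B) := by
    have hl0 : (l : ℂ) ≠ 0 := by exact_mod_cast (by linarith : l ≠ 0)
    rw [hB, mul_add, add_mul, mul_smul_comm, smul_mul_assoc, mul_one, hL, conjTranspose_mul]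
    rw [← Complex.coe_smul, smul_add, smul_smul, Complex.ofReal_inv, inv_mul_cancel₀ hl0, one_smul]
    simp [Matrix.mul_assoc, sub_eq_add_neg, add_comm]
  rw [e]
  exact (hP.conjTranspose_mul_mul_same B).smul (by positivity)

/-- Hermitian interpolation. -/
theorem exists_herm {n : ℕ} (x y : Fin n → ℂ) (hy : y ≠ 0) (h : (star y ⬝ᵥ x).im = 0) :
    ∃ A : Matrix (Fin n) (Fin n) ℂ, A.IsHermitian ∧ A *ᵥ y = x := by
  set r : ℂ := star y ⬝ᵥ y with hr
  set t : ℂ := star y ⬝ᵥ x with ht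
  have hr0 : r ≠ 0 := by rw [hr]; simpa using hy
  have hrs : star r = r := by rw [hr]; exact (star_dotProduct y y).symm
  have hts : star t = t := Complex.conj_eq_iff_im.mpr h
  have hxy : star x ⬝ᵥ y = t := by rw [← hts, ht]; exact star_dotProduct x y
  refine ⟨r⁻¹ • (vecMulVec x (star y) + vecMulVec y (star x)) - (t * r⁻¹ * r⁻¹) • vecMulVec y (star y), ?_, ?_⟩
  · unfold IsHermitian
    simp only [conjTranspose_sub, conjTranspose_smul, conjTranspose_add, conjTranspose_vecMulVec, star_star, star_mul', star_inv₀, hrs, hts]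
    rw [add_comm (vecMulVec x (star y))]
  · simp only [sub_mulVec, smul_mulVec, add_mulVec, vecMulVec_mulVec, hxy, ← hr]
    ext i
    simp
    field_simp
    ring

theorem evalC_div (N D : ℝ[X]) (s : ℂ) (hD : D.eval₂ (algebraMap ℝ ℂ) s ≠ 0) :
    evalC (algebraMap ℝ[X] (RatFunc ℝ) N / algebraMap ℝ[X] (RatFunc ℝ) D) s =
      N.eval₂ (algebraMap ℝ ℂ) s / D.eval₂ (algebraMap ℝ ℂ) s := by
  have hD0 : D ≠ 0 := by rintro rfl; simp at hD
  set f := algebraMap ℝ[X] (RatFunc ℝ) N / algebraMap ℝ[X] (RatFunc ℝ) D with hf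
  have h1 : f.num * D = N * f.denom := (RatFunc.num_mul_eq_mul_denom_iff hD0).mpr hf
  have h2 : f.denom.eval₂ (algebraMap ℝ ℂ) s ≠ 0 := by
    intro h
    obtain ⟨q, hq⟩ := RatFunc.denom_div_dvd N D
    apply hD
    rw [hq, eval₂_mul, ← hf, h, zero_mul]
  have h3 := congrArg (eval₂ (algebraMap ℝ ℂ) s) h1
  rw [eval₂_mul, eval₂_mul] at h3
  unfold evalC RatFunc.eval
  rw [div_eq_div_iff h2 hD, h3]

theorem not_pole_div (N D : ℝ[X]) (s : ℂ) (hD : D.eval₂ (algebraMap ℝ ℂ) s ≠ 0) :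
    ¬ IsPoleAt (algebraMap ℝ[X] (RatFunc ℝ) N / algebraMap ℝ[X] (RatFunc ℝ) D) s := by
  intro h
  obtain ⟨q, hq⟩ := RatFunc.denom_div_dvd N D
  apply hD
  unfold IsPoleAt at h
  rw [hq, eval₂_mul, h, zero_mul]

theorem strict_div (N D : ℝ[X]) (h : N.degree < D.degree) :
    (algebraMap ℝ[X] (RatFunc ℝ) N / algebraMap ℝ[X] (RatFunc ℝ) D).num.degree <
    (algebraMap ℝ[X] (RatFunc ℝ) N / algebraMap ℝ[X] (RatFunc ℝ) D).denom.degree := by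
  have hD0 : D ≠ 0 := by rintro rfl; simp at h
  set f := algebraMap ℝ[X] (RatFunc ℝ) N / algebraMap ℝ[X] (RatFunc ℝ) D with hf
  have h1 : f.num * D = N * f.denom := (RatFunc.num_mul_eq_mul_denom_iff hD0).mpr hf
  have hd : f.denom ≠ 0 := RatFunc.denom_ne_zero f
  by_cases hn : f.num = 0
  · rw [hn, degree_zero]; exact bot_lt_iff_ne_bot.mpr (by simpa using hd)
  have hN : N ≠ 0 := by
    rintro rfl
    rw [zero_mul] at h1
    exact (mul_ne_zero hn hD0) h1
  have h2 := congrArg natDegree h1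
  rw [natDegree_mul hn hD0, natDegree_mul hN hd] at h2
  have h3 := natDegree_lt_natDegree hN h
  apply degree_lt_degree
  omega

theorem not_pole_add {f g : RatFunc ℝ} {s : ℂ} (hf : ¬ IsPoleAt f s) (hg : ¬ IsPoleAt g s) :
    ¬ IsPoleAt (f + g) s := by
  intro h
  obtain ⟨q, hq⟩ := RatFunc.denom_add_dvd f g
  unfold IsPoleAt at *
  have := congrArg (eval₂ (algebraMap ℝ ℂ) s) hq
  rw [eval₂_mul, eval₂_mul, h, zero_mul] at this
  exact mul_ne_zero hf hg this

theorem not_pole_mul {f g : RatFunc ℝ} {s : ℂ} (hf : ¬ IsPoleAt f s) (hg : ¬ IsPoleAt g s) :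
    ¬ IsPoleAt (f * g) s := by
  intro h
  obtain ⟨q, hq⟩ := RatFunc.denom_mul_dvd f g
  unfold IsPoleAt at *
  have := congrArg (eval₂ (algebraMap ℝ ℂ) s) hq
  rw [eval₂_mul, eval₂_mul, h, zero_mul] at this
  exact mul_ne_zero hf hg this

theorem not_pole_zero (s : ℂ) : ¬ IsPoleAt 0 s := by simp [IsPoleAt]

theorem sum_aux {ι : Type*} (t : Finset ι) (f : ι → RatFunc ℝ) (s : ℂ)
    (hf : ∀ i, ¬ IsPoleAt (f i) s) :
    ¬ IsPoleAt (∑ i ∈ t, f i) s ∧ evalC (∑ i ∈ t, f i) s = ∑ i ∈ t, evalC (f i) s := by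
  classical
  induction t using Finset.induction_on with
  | empty => exact ⟨by simpa using not_pole_zero s, by simp [evalC]⟩
  | insert a t ha ih =>
    rw [Finset.sum_insert ha, Finset.sum_insert ha, ← ih.2]
    exact ⟨not_pole_add (hf a) ih.1, RatFunc.eval_add _ _ (hf a) ih.1⟩

theorem hasPole_mul {G H : Matrix (Fin n) (Fin n) (RatFunc ℝ)} {s : ℂ} (hG : ¬ HasPole G s)
    (hH : ¬ HasPole H s) : ¬ HasPole (G * H) s := by
  unfold HasPole at *
  push Not at *
  intro i j
  rw [Matrix.mul_apply]
  exact (sum_aux _ _ s fun k => not_pole_mul (hG i k) (hH k j)).1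

theorem evalM_mul {G H : Matrix (Fin n) (Fin n) (RatFunc ℝ)} {s : ℂ} (hG : ¬ HasPole G s)
    (hH : ¬ HasPole H s) : evalM (G * H) s = evalM G s * evalM H s := by
  unfold HasPole at *
  push Not at *
  ext i j
  simp only [evalM, Matrix.of_apply, Matrix.mul_apply]
  rw [(sum_aux _ _ s fun k => not_pole_mul (hG i k) (hH k j)).2]
  exact Finset.sum_congr rfl fun k _ => RatFunc.eval_mul _ _ (hG i k) (hH k j)

theorem evalM_add {G H : Matrix (Fin n) (Fin n) (RatFunc ℝ)} {s : ℂ} (hG : ¬ HasPole G s)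
    (hH : ¬ HasPole H s) : evalM (G + H) s = evalM G s + evalM H s := by
  unfold HasPole at *
  push Not at *
  ext i j
  exact RatFunc.eval_add _ _ (hG i j) (hH i j)

theorem evalM_one (s : ℂ) : evalM (1 : Matrix (Fin n) (Fin n) (RatFunc ℝ)) s = 1 := by
  ext i j
  by_cases h : i = j
  · subst h; simp [evalM, evalC]
  · simp [evalM, evalC, h]

/-- A stable loop cannot be singular at `jω`. -/
theorem loop_nonsingular {P G : Matrix (Fin n) (Fin n) (RatFunc ℝ)} {s : ℂ} (hs : 0 ≤ s.re)
    (hP : ¬ HasPole P s) (hG : ¬ HasPole G s) (hst : FeedbackStable P G) (x : Fin n → ℂ)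
    (hx : evalM P s *ᵥ (evalM G s *ᵥ x) = x) : x = 0 := by
  obtain ⟨hdet, -, hpole⟩ := hst
  set T := (1 - P * G)⁻¹ with hT
  have hTp : ¬ HasPole T s := by
    rintro ⟨i, j, hij⟩
    exact hpole s hs (Sum.inl i) (Sum.inl j) (by simpa using hij)
  have h1 : T * (1 - P * G) = 1 := Matrix.nonsing_inv_mul _ (isUnit_iff_ne_zero.mpr hdet)
  have h2 : T = 1 + T * (P * G) := by rw [← h1]; noncomm_ring
  have hone : ¬ HasPole (1 : Matrix (Fin n) (Fin n) (RatFunc ℝ)) s := by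
    rintro ⟨i, j, hij⟩
    by_cases h : i = j
    · subst h; simp [IsPoleAt] at hij
    · simp [IsPoleAt, h] at hij
  have h3 := congrArg (fun Z => evalM Z s *ᵥ x) h2
  rw [evalM_add hone (hasPole_mul hTp (hasPole_mul hP hG)),
    evalM_mul hTp (hasPole_mul hP hG), evalM_mul hP hG, evalM_one, add_mulVec, one_mulVec,
    ← mulVec_mulVec, ← mulVec_mulVec, hx] at h3
  simpa using h3

/-- common denominator -/
def pD (a b : ℝ) : ℝ[X] := (X + 1) * (X ^ 2 + C (a ^ 2)) * (X ^ 2 + C (b ^ 2))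

/-- numerator -/
def pN (a b c m S K : ℝ) : ℝ[X] :=
  C c * ((X ^ 2 + C (a ^ 2)) * (X ^ 2 + C (b ^ 2))) +
  (C S + C K * X) * ((X + 1) * (X ^ 2 + C (b ^ 2))) +
  C m * ((X + 1) * (X ^ 2 + C (a ^ 2)))

theorem pD_degree (a b : ℝ) : (pD a b).degree = 5 := by
  unfold pD; compute_degree!

theorem pN_degree (a b c m S K : ℝ) : (pN a b c m S K).degree ≤ 4 := by
  unfold pN; compute_degree

theorem pD_eval (a b : ℝ) (s : ℂ) : (pD a b).eval₂ (algebraMap ℝ ℂ) s =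
    (s + 1) * (s ^ 2 + (a : ℂ) ^ 2) * (s ^ 2 + (b : ℂ) ^ 2) := by
  simp [pD, eval₂_mul, eval₂_add, eval₂_pow]

theorem pN_eval (a b c m S K : ℝ) (s : ℂ) : (pN a b c m S K).eval₂ (algebraMap ℝ ℂ) s =
    c * ((s ^ 2 + (a : ℂ) ^ 2) * (s ^ 2 + (b : ℂ) ^ 2)) +
    (S + K * s) * ((s + 1) * (s ^ 2 + (b : ℂ) ^ 2)) +
    m * ((s + 1) * (s ^ 2 + (a : ℂ) ^ 2)) := by
  simp [pN, eval₂_mul, eval₂_add, eval₂_pow]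

/-- The destabilizing plant. -/
def plant (a b c m : ℝ) (S K : Matrix (Fin n) (Fin n) ℝ) : Matrix (Fin n) (Fin n) (RatFunc ℝ) :=
  Matrix.of fun i j => algebraMap ℝ[X] (RatFunc ℝ)
    (pN a b (if i = j then c else 0) (if i = j then m else 0) (S i j) (K i j)) /
    algebraMap ℝ[X] (RatFunc ℝ) (pD a b)

theorem plant_not_pole {a b c m : ℝ} {S K : Matrix (Fin n) (Fin n) ℝ} {s : ℂ}
    (h : (s + 1) * (s ^ 2 + (a : ℂ) ^ 2) * (s ^ 2 + (b : ℂ) ^ 2) ≠ 0) :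
    ¬ HasPole (plant a b c m S K) s := by
  rintro ⟨i, j, hij⟩
  exact not_pole_div _ _ s (by rw [pD_eval]; exact h) hij

theorem plant_eval {a b c m : ℝ} {S K : Matrix (Fin n) (Fin n) ℝ} {s : ℂ}
    (h : (s + 1) * (s ^ 2 + (a : ℂ) ^ 2) * (s ^ 2 + (b : ℂ) ^ 2) ≠ 0) :
    evalM (plant a b c m S K) s =
      (c / (s + 1)) • (1 : Matrix (Fin n) (Fin n) ℂ) +
      (s ^ 2 + (a : ℂ) ^ 2)⁻¹ • (S.map Complex.ofReal + s • K.map Complex.ofReal) +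
      (m / (s ^ 2 + (b : ℂ) ^ 2)) • (1 : Matrix (Fin n) (Fin n) ℂ) := by
  have h1 : s + 1 ≠ 0 := by rintro h0; simp [h0] at h
  have h2 : s ^ 2 + (a : ℂ) ^ 2 ≠ 0 := by rintro h0; simp [h0] at h
  have h3 : s ^ 2 + (b : ℂ) ^ 2 ≠ 0 := by rintro h0; simp [h0] at h
  ext i j
  simp only [evalM, plant, Matrix.of_apply]
  rw [evalC_div _ _ _ (by rw [pD_eval]; exact h), pD_eval, pN_eval]
  by_cases hij : i = j
  · subst hij
    simp
    field_simp
  · simp [hij]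
    field_simp

theorem plant_strict (a b c m : ℝ) (S K : Matrix (Fin n) (Fin n) ℝ) :
    StrictlyProper (plant a b c m S K) := by
  intro i j
  apply strict_div
  rw [pD_degree]
  exact lt_of_le_of_lt (pN_degree _ _ _ _ _ _) (by norm_num)

theorem factor_sq (s : ℂ) (a : ℝ) : s ^ 2 + (a : ℂ) ^ 2 = (s - jw a) * (s + jw a) := by
  unfold jw
  linear_combination ((a:ℂ)^2) * Complex.I_sq

theorem jw_re (a : ℝ) : (jw a).re = 0 := by simp [jw]

theorem jw_sq (a : ℝ) : (jw a) ^ 2 = ((-a ^ 2 : ℝ) : ℂ) := by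
  simp [jw, mul_pow]

theorem add_one_ne {s : ℂ} (hs : 0 ≤ s.re) : s + 1 ≠ 0 := by
  intro h
  have := congrArg Complex.re h
  simp at this
  linarith

theorem jw_den_ne {w a : ℝ} (hw : 0 < w) (ha : 0 < a) (h : w ≠ a) :
    (jw w) ^ 2 + (a : ℂ) ^ 2 ≠ 0 := by
  rw [jw_sq]
  intro h0
  have h1 : -w ^ 2 + a ^ 2 = 0 := by exact_mod_cast h0
  have : (a - w) * (a + w) = 0 := by linarith
  rcases mul_eq_zero.mp this with h | h
  · exact ‹w ≠ a› (by linarith)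
  · linarith

theorem rhp_den_ne {s : ℂ} (hs : 0 < s.re) (a : ℝ) : s ^ 2 + (a : ℂ) ^ 2 ≠ 0 := by
  rw [factor_sq]
  apply mul_ne_zero
  · intro h
    have := congrArg Complex.re h
    simp [jw] at this
    linarith
  · intro h
    have := congrArg Complex.re h
    simp [jw] at this
    linarith

theorem plant_no_double {a b c m : ℝ} (ha : 0 < a) (hb : 0 < b)
    (S K : Matrix (Fin n) (Fin n) ℝ) : NoDoubleOriginPole (plant a b c m S K) := by
  intro i j
  rw [rootMultiplicity_eq_zero]
  · norm_num
  · intro h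
    have h0 : ¬ HasPole (plant a b c m S K) 0 := plant_not_pole (by
      have : (a : ℂ) ≠ 0 := by exact_mod_cast ha.ne'
      have : (b : ℂ) ≠ 0 := by exact_mod_cast hb.ne'
      simp [*])
    apply h0
    refine ⟨i, j, ?_⟩
    unfold IsPoleAt
    have := congrArg (algebraMap ℝ ℂ) h.eq_zero
    rw [← eval₂_at_apply] at this
    simpa using this

theorem niKer_herm_smul (Z : Matrix (Fin n) (Fin n) ℂ) (hZ : Z.IsHermitian) : niKer Z = 0 := by
  unfold niKer; rw [hZ.eq, sub_self, smul_zero]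

theorem SK_herm {S K : Matrix (Fin n) (Fin n) ℝ} (hS : Sᵀ = S) (hK : Kᵀ = -K) (w : ℝ) :
    (S.map Complex.ofReal + jw w • K.map Complex.ofReal).IsHermitian := by
  ext i j
  have h1 := congrFun (congrFun hS i) j
  have h2 := congrFun (congrFun hK i) j
  simp only [Matrix.transpose_apply, Matrix.neg_apply] at h1 h2
  simp [jw, h1, h2]

theorem niKer_add (A B : Matrix (Fin n) (Fin n) ℂ) : niKer (A + B) = niKer A + niKer B := by
  unfold niKer
  rw [conjTranspose_add, ← smul_add]
  congr 1
  abel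

theorem pole_div (N D : ℝ[X]) (s : ℂ) (hD0 : D ≠ 0) (hD : D.eval₂ (algebraMap ℝ ℂ) s = 0)
    (hN : N.eval₂ (algebraMap ℝ ℂ) s ≠ 0) :
    IsPoleAt (algebraMap ℝ[X] (RatFunc ℝ) N / algebraMap ℝ[X] (RatFunc ℝ) D) s := by
  set f := algebraMap ℝ[X] (RatFunc ℝ) N / algebraMap ℝ[X] (RatFunc ℝ) D with hf
  have h1 : f.num * D = N * f.denom := (RatFunc.num_mul_eq_mul_denom_iff hD0).mpr hf
  have h3 := congrArg (eval₂ (algebraMap ℝ ℂ) s) h1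
  rw [eval₂_mul, eval₂_mul, hD, mul_zero] at h3
  exact (mul_eq_zero.mp h3.symm).resolve_left hN

theorem jw_root (a : ℝ) : (jw a) ^ 2 + (a : ℂ) ^ 2 = 0 := by
  rw [factor_sq, sub_self, zero_mul]

theorem jw_ne {a : ℝ} (ha : 0 < a) : jw a + jw a ≠ 0 := by
  have : (a : ℂ) ≠ 0 := by exact_mod_cast ha.ne'
  rw [← two_mul]
  simp [jw, this]

theorem pD_ne (a b : ℝ) : pD a b ≠ 0 := by
  intro h
  have := pD_degree a b
  rw [h, degree_zero] at this
  exact absurd this (by decide)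

theorem residue_a {a b c m : ℝ} (ha : 0 < a) (hb : 0 < b) (hab : a ≠ b)
    (S K : Matrix (Fin n) (Fin n) ℝ) :
    Tendsto (fun s : ℂ => (s - jw a) • Complex.I • evalM (plant a b c m S K) s) (𝓝[≠] jw a)
      (𝓝 ((1 / (2 * a) : ℝ) • (S.map Complex.ofReal + jw a • K.map Complex.ofReal))) := by
  have n1 : jw a + 1 ≠ 0 := add_one_ne (jw_re a).ge
  have n2 := jw_ne ha
  have n3 := jw_den_ne ha hb hab
  let F : ℂ → Matrix (Fin n) (Fin n) ℂ := fun s => Complex.I •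
    (((s - jw a) * (c / (s + 1))) • (1 : Matrix (Fin n) (Fin n) ℂ) +
      (s + jw a)⁻¹ • (S.map Complex.ofReal + s • K.map Complex.ofReal) +
      ((s - jw a) * (m / (s ^ 2 + (b : ℂ) ^ 2))) • (1 : Matrix (Fin n) (Fin n) ℂ))
  have hF : ContinuousAt F (jw a) := by
    have c4 : ContinuousAt (fun s : ℂ => S.map Complex.ofReal + s • K.map Complex.ofReal) (jw a) := by
      fun_prop
    have c1 : ContinuousAt (fun s : ℂ => (s - jw a) * ((c : ℂ) / (s + 1))) (jw a) := by
      fun_prop (disch := assumption)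
    have c2 : ContinuousAt (fun s : ℂ => (s + jw a)⁻¹) (jw a) := by
      fun_prop (disch := assumption)
    have c3 : ContinuousAt (fun s : ℂ => (s - jw a) * ((m : ℂ) / (s ^ 2 + (b : ℂ) ^ 2))) (jw a) := by
      fun_prop (disch := assumption)
    exact (((c1.smul continuousAt_const).add (c2.smul c4)).add (c3.smul continuousAt_const)).const_smul Complex.I
  have hFa : F (jw a) = (1 / (2 * a) : ℝ) • (S.map Complex.ofReal + jw a • K.map Complex.ofReal) := by
    simp only [F, sub_self, zero_mul, zero_smul, zero_add, add_zero]
    rw [smul_smul, ← Complex.coe_smul]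
    congr 1
    have : (a : ℂ) ≠ 0 := by exact_mod_cast ha.ne'
    simp [jw]
    field_simp
    ring
  rw [← hFa]
  refine Tendsto.congr' ?_ (hF.tendsto.mono_left nhdsWithin_le_nhds)
  have e1 : ∀ᶠ s in 𝓝[≠] jw a, s + 1 ≠ 0 := nhdsWithin_le_nhds
    ((by fun_prop : ContinuousAt (fun s : ℂ => s + 1) (jw a)).eventually_ne n1)
  have e2 : ∀ᶠ s in 𝓝[≠] jw a, s + jw a ≠ 0 := nhdsWithin_le_nhds
    ((by fun_prop : ContinuousAt (fun s : ℂ => s + jw a) (jw a)).eventually_ne n2)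
  have e3 : ∀ᶠ s in 𝓝[≠] jw a, s ^ 2 + (b : ℂ) ^ 2 ≠ 0 := nhdsWithin_le_nhds
    ((by fun_prop : ContinuousAt (fun s : ℂ => s ^ 2 + (b : ℂ) ^ 2) (jw a)).eventually_ne n3)
  filter_upwards [e1, e2, e3, self_mem_nhdsWithin] with s h1 h2 h3 h4
  have h4' : s - jw a ≠ 0 := sub_ne_zero.mpr h4
  rw [plant_eval (mul_ne_zero (mul_ne_zero h1 (by rw [factor_sq]; exact mul_ne_zero h4' h2)) h3)]
  simp only [F]
  rw [smul_comm (s - jw a) Complex.I]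
  congr 1
  rw [smul_add (s - jw a), smul_add (s - jw a), smul_smul (s - jw a), smul_smul (s - jw a), smul_smul (s - jw a),
    factor_sq s a]
  congr 3
  field_simp

theorem residue_b {a b c m : ℝ} (ha : 0 < a) (hb : 0 < b) (hab : a ≠ b)
    (S K : Matrix (Fin n) (Fin n) ℝ) :
    Tendsto (fun s : ℂ => (s - jw b) • Complex.I • evalM (plant a b c m S K) s) (𝓝[≠] jw b)
      (𝓝 ((m / (2 * b) : ℝ) • (1 : Matrix (Fin n) (Fin n) ℂ))) := by
  have n1 : jw b + 1 ≠ 0 := add_one_ne (jw_re b).ge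
  have n2 := jw_ne hb
  have n3 := jw_den_ne hb ha hab.symm
  let F : ℂ → Matrix (Fin n) (Fin n) ℂ := fun s => Complex.I •
    (((s - jw b) * (c / (s + 1))) • (1 : Matrix (Fin n) (Fin n) ℂ) +
      ((s - jw b) * (s ^ 2 + (a : ℂ) ^ 2)⁻¹) • (S.map Complex.ofReal + s • K.map Complex.ofReal) +
      (m / (s + jw b)) • (1 : Matrix (Fin n) (Fin n) ℂ))
  have hF : ContinuousAt F (jw b) := by
    have c4 : ContinuousAt (fun s : ℂ => S.map Complex.ofReal + s • K.map Complex.ofReal) (jw b) := by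
      fun_prop
    have c1 : ContinuousAt (fun s : ℂ => (s - jw b) * ((c : ℂ) / (s + 1))) (jw b) := by
      fun_prop (disch := assumption)
    have c2 : ContinuousAt (fun s : ℂ => (s - jw b) * (s ^ 2 + (a : ℂ) ^ 2)⁻¹) (jw b) := by
      fun_prop (disch := assumption)
    have c3 : ContinuousAt (fun s : ℂ => (m : ℂ) / (s + jw b)) (jw b) := by
      fun_prop (disch := assumption)
    exact (((c1.smul continuousAt_const).add (c2.smul c4)).add (c3.smul continuousAt_const)).const_smul Complex.I
  have hFa : F (jw b) = (m / (2 * b) : ℝ) • (1 : Matrix (Fin n) (Fin n) ℂ) := by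
    simp only [F, sub_self, zero_mul, zero_smul, zero_add]
    rw [smul_smul, ← Complex.coe_smul]
    congr 1
    have : (b : ℂ) ≠ 0 := by exact_mod_cast hb.ne'
    simp [jw]
    field_simp
    ring
  rw [← hFa]
  refine Tendsto.congr' ?_ (hF.tendsto.mono_left nhdsWithin_le_nhds)
  have e1 : ∀ᶠ s in 𝓝[≠] jw b, s + 1 ≠ 0 := nhdsWithin_le_nhds
    ((by fun_prop : ContinuousAt (fun s : ℂ => s + 1) (jw b)).eventually_ne n1)
  have e2 : ∀ᶠ s in 𝓝[≠] jw b, s + jw b ≠ 0 := nhdsWithin_le_nhds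
    ((by fun_prop : ContinuousAt (fun s : ℂ => s + jw b) (jw b)).eventually_ne n2)
  have e3 : ∀ᶠ s in 𝓝[≠] jw b, s ^ 2 + (a : ℂ) ^ 2 ≠ 0 := nhdsWithin_le_nhds
    ((by fun_prop : ContinuousAt (fun s : ℂ => s ^ 2 + (a : ℂ) ^ 2) (jw b)).eventually_ne n3)
  filter_upwards [e1, e2, e3, self_mem_nhdsWithin] with s h1 h2 h3 h4
  have h4' : s - jw b ≠ 0 := sub_ne_zero.mpr h4
  rw [plant_eval (mul_ne_zero (mul_ne_zero h1 h3) (by rw [factor_sq]; exact mul_ne_zero h4' h2))]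
  simp only [F]
  rw [smul_comm (s - jw b) Complex.I]
  congr 1
  rw [smul_add (s - jw b), smul_add (s - jw b), smul_smul (s - jw b), smul_smul (s - jw b), smul_smul (s - jw b),
    factor_sq s b]
  congr 2
  field_simp

theorem plant_NI {a b c m : ℝ} (ha : 0 < a) (hb : 0 < b) (hab : a ≠ b) (hc : 0 ≤ c) (hm : 0 < m)
    (S K : Matrix (Fin n) (Fin n) ℝ) (hS : Sᵀ = S) (hK : Kᵀ = -K)
    (hp : (S.map Complex.ofReal + jw a • K.map Complex.ofReal).PosSemidef)
    (i₀ : Fin n) (hne : (S.map Complex.ofReal + jw a • K.map Complex.ofReal) i₀ i₀ ≠ 0) :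
    IsNI (plant a b c m S K) := by
  have hpa : HasPole (plant a b c m S K) (jw a) := by
    refine ⟨i₀, i₀, pole_div _ _ _ (pD_ne a b) ?_ ?_⟩
    · rw [pD_eval, jw_root]; simp
    · rw [pN_eval, jw_root]
      simp only [zero_mul, mul_zero, zero_add, add_zero]
      refine mul_ne_zero ?_ (mul_ne_zero (add_one_ne (jw_re a).ge) (jw_den_ne ha hb hab))
      simpa [mul_comm] using hne
  have hpb : HasPole (plant a b c m S K) (jw b) := by
    refine ⟨i₀, i₀, pole_div _ _ _ (pD_ne a b) ?_ ?_⟩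
    · rw [pD_eval, jw_root]; simp
    · rw [pN_eval, jw_root]
      simp only [mul_zero, zero_add, if_true]
      exact mul_ne_zero (by exact_mod_cast hm.ne')
        (mul_ne_zero (add_one_ne (jw_re b).ge) (jw_den_ne hb ha hab.symm))
  refine ⟨fun i j => (plant_strict a b c m S K i j).le, ?_, ?_, ?_, ?_⟩
  · intro s hs
    exact plant_not_pole (mul_ne_zero (mul_ne_zero (add_one_ne hs.le) (rhp_den_ne hs a))
      (rhp_den_ne hs b))
  · intro w hw hpole
    have hwa : w ≠ a := by rintro rfl; exact hpole hpa
    have hwb : w ≠ b := by rintro rfl; exact hpole hpb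
    rw [plant_eval (mul_ne_zero (mul_ne_zero (add_one_ne (jw_re w).ge) (jw_den_ne hw ha hwa))
      (jw_den_ne hw hb hwb)), niKer_add, niKer_add]
    have r1 : niKer (((jw w) ^ 2 + (a : ℂ) ^ 2)⁻¹ •
        (S.map Complex.ofReal + jw w • K.map Complex.ofReal)) = 0 := by
      apply niKer_herm_smul
      have : ((jw w) ^ 2 + (a : ℂ) ^ 2)⁻¹ = (((-w ^ 2 + a ^ 2)⁻¹ : ℝ) : ℂ) := by
        rw [jw_sq]; push_cast; rfl
      rw [this]
      exact IsSelfAdjoint.smul (by simp [IsSelfAdjoint]) (SK_herm hS hK w)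
    have r2 : niKer ((m / ((jw w) ^ 2 + (b : ℂ) ^ 2)) • (1 : Matrix (Fin n) (Fin n) ℂ)) = 0 := by
      apply niKer_herm_smul
      have : (m / ((jw w) ^ 2 + (b : ℂ) ^ 2)) = ((m / (-w ^ 2 + b ^ 2) : ℝ) : ℂ) := by
        rw [jw_sq]; push_cast; rfl
      rw [this]
      exact IsSelfAdjoint.smul (by simp [IsSelfAdjoint]) (isHermitian_one)
    have r3 : niKer ((c / (jw w + 1)) • (1 : Matrix (Fin n) (Fin n) ℂ)) =
        (2 * c * w / (1 + w ^ 2) : ℝ) • (1 : Matrix (Fin n) (Fin n) ℂ) := by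
      unfold niKer
      rw [conjTranspose_smul, conjTranspose_one, ← sub_smul, smul_smul, ← Complex.coe_smul]
      congr 1
      have h1 : jw w + 1 ≠ 0 := add_one_ne (jw_re w).ge
      have h2 : -jw w + 1 ≠ 0 := add_one_ne (by simp [jw_re w])
      have h3 : (1 : ℂ) + w ^ 2 ≠ 0 := by exact_mod_cast (by positivity : (1 + w ^ 2 : ℝ) ≠ 0)
      have h4 : star (c / (jw w + 1)) = c / (-jw w + 1) := by simp [jw]
      rw [h4]
      push_cast
      unfold jw at *
      field_simp
      linear_combination (-2 * (c : ℂ) * w) * Complex.I_sq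
    rw [r1, r2, r3, add_zero, add_zero]
    exact PosSemidef.one.smul (by positivity)
  · intro w hw hpole
    by_cases hwa : w = a
    · subst hwa
      exact ⟨_, hp.smul (by positivity), residue_a ha hb hab S K⟩
    by_cases hwb : w = b
    · subst hwb
      exact ⟨_, PosSemidef.one.smul (by positivity), residue_b ha hb hab S K⟩
    exact absurd hpole (plant_not_pole (mul_ne_zero (mul_ne_zero (add_one_ne (jw_re w).ge)
      (jw_den_ne hw ha hwa)) (jw_den_ne hw hb hwb)))
  · intro h
    exfalso
    refine plant_not_pole ?_ h
    have : (a : ℂ) ≠ 0 := by exact_mod_cast ha.ne'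
    have : (b : ℂ) ≠ 0 := by exact_mod_cast hb.ne'
    simp [*]

/-- NI interpolation at one frequency. -/
theorem exists_plant {w : ℝ} (hw : 0 < w) (x y : Fin n → ℂ) (hy : y ≠ 0)
    (h : (star y ⬝ᵥ x).im ≤ 0) :
    ∃ P : Matrix (Fin n) (Fin n) (RatFunc ℝ), IsNI P ∧ StrictlyProper P ∧ NoDoubleOriginPole P ∧
      ¬ HasPole P (jw w) ∧ evalM P (jw w) *ᵥ y = x := by
  obtain ⟨i₀, -⟩ : ∃ i, y i ≠ 0 := Function.ne_iff.mp hy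
  have hr : (0 : ℂ) < star y ⬝ᵥ y := by simpa using hy
  obtain ⟨hr1, hr2⟩ := Complex.pos_iff.mp hr
  set r : ℝ := (star y ⬝ᵥ y).re with hrdef
  have hrr : star y ⬝ᵥ y = (r : ℂ) := by apply Complex.ext <;> simp [← hr2, hrdef]
  set q : ℝ := (star y ⬝ᵥ x).im with hq
  set d : ℝ := -q / r with hd
  have hd0 : 0 ≤ d := div_nonneg (by linarith) hr1.le
  set c : ℝ := d * (1 + w ^ 2) / w with hc
  have hc0 : 0 ≤ c := by positivity
  have hcv : (c : ℂ) / (jw w + 1) = (d / w : ℝ) - Complex.I * d := by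
    have h1 : jw w + 1 ≠ 0 := add_one_ne (jw_re w).ge
    have hw' : (w : ℂ) ≠ 0 := by exact_mod_cast hw.ne'
    rw [div_eq_iff h1, hc]
    unfold jw
    push_cast
    field_simp
    linear_combination ((d : ℂ) * w ^ 2) * Complex.I_sq
  obtain ⟨A, hA, hAy⟩ := exists_herm (x - ((c : ℂ) / (jw w + 1)) • y) y hy (by
    rw [dotProduct_sub, dotProduct_smul, hrr, hcv]
    simp [← hq, hd]
    field_simp
    ring)
  set S0 : Matrix (Fin n) (Fin n) ℝ := A.map Complex.re with hS0
  set K0 : Matrix (Fin n) (Fin n) ℝ := A.map Complex.im with hK0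
  have hS0t : S0ᵀ = S0 := by
    ext i j
    have := congrArg Complex.re (hA.apply i j)
    simpa [hS0] using this
  have hK0t : K0ᵀ = -K0 := by
    ext i j
    have := congrArg Complex.im (hA.apply i j)
    simp [hK0] at this ⊢
    linarith
  obtain ⟨l, hl, hZ⟩ := exists_shift _ (SK_herm hS0t hK0t 2)
  set a : ℝ := 2 * w with ha
  set b : ℝ := w / 2 with hb
  set m : ℝ := 3 * w ^ 2 / 4 * (l + 1) with hm
  set S : Matrix (Fin n) (Fin n) ℝ := (3 * w ^ 2) • (S0 + (l + 1) • 1) with hS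
  set K : Matrix (Fin n) (Fin n) ℝ := (3 * w) • K0 with hK
  have hSK : S.map Complex.ofReal + jw a • K.map Complex.ofReal =
      (3 * w ^ 2) • ((S0.map Complex.ofReal + jw 2 • K0.map Complex.ofReal +
        (l : ℂ) • (1 : Matrix (Fin n) (Fin n) ℂ)) + 1) := by
    ext i j
    by_cases hij : i = j
    · subst hij
      simp [hS, hK, ha, jw]
      ring
    · simp [hS, hK, ha, jw, hij]
      ring
  have hne : (jw w + 1) * ((jw w) ^ 2 + (a : ℂ) ^ 2) * ((jw w) ^ 2 + (b : ℂ) ^ 2) ≠ 0 :=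
    mul_ne_zero (mul_ne_zero (add_one_ne (jw_re w).ge)
      (jw_den_ne hw (by positivity) (by rw [ha]; intro h; linarith)))
      (jw_den_ne hw (by positivity) (by rw [hb]; intro h; linarith))
  refine ⟨plant a b c m S K, ?_, plant_strict _ _ _ _ _ _,
    plant_no_double (by positivity) (by positivity) _ _, plant_not_pole hne, ?_⟩
  · apply plant_NI (by positivity) (by positivity) (by rw [ha, hb]; intro h; linarith) hc0
      (by positivity) S K _ _ _ i₀ _
    · rw [hS, transpose_smul, transpose_add, hS0t, transpose_smul, transpose_one]
    · rw [hK, transpose_smul, hK0t, smul_neg]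
    · rw [hSK]
      exact (hZ.add PosSemidef.one).smul (by positivity)
    · rw [hSK, Matrix.smul_apply, Matrix.add_apply, Matrix.one_apply_eq]
      have h0 := hZ.diag_nonneg (i := i₀)
      have h1 : (0 : ℂ) < (S0.map Complex.ofReal + jw 2 • K0.map Complex.ofReal +
        (l : ℂ) • (1 : Matrix (Fin n) (Fin n) ℂ)) i₀ i₀ + 1 := add_pos_of_nonneg_of_pos h0 one_pos
      exact smul_ne_zero (by positivity) h1.ne'
  · rw [plant_eval hne]
    have e : ((jw w) ^ 2 + (a : ℂ) ^ 2)⁻¹ • (S.map Complex.ofReal + jw w • K.map Complex.ofReal) +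
      (m / ((jw w) ^ 2 + (b : ℂ) ^ 2)) • (1 : Matrix (Fin n) (Fin n) ℂ) = A := by
      have hw' : (w : ℂ) ≠ 0 := by exact_mod_cast hw.ne'
      have e1 : (jw w) ^ 2 + (a : ℂ) ^ 2 = 3 * w ^ 2 := by
        rw [jw_sq, ha]; push_cast; ring
      have e2 : (m / ((jw w) ^ 2 + (b : ℂ) ^ 2)) = -(l + 1) := by
        have : (jw w) ^ 2 + (b : ℂ) ^ 2 = -(3 * w ^ 2 / 4) := by
          rw [jw_sq, hb]; push_cast; ring
        rw [this, hm]; push_cast; field_simp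
      rw [e1, e2]
      ext i j
      have e3 : A i j = (S0 i j : ℂ) + (K0 i j : ℂ) * Complex.I := by
        simp [hS0, hK0]
      rw [e3]
      by_cases hij : i = j
      · subst hij
        simp [hS, hK, jw]
        field_simp
        ring
      · simp [hS, hK, jw, hij]
        field_simp
    rw [add_assoc, e, add_mulVec, hAy, smul_mulVec, one_mulVec]
    simp

/-- robust stability against strictly proper NI uncertainty
without double origin poles implies a frequency-wise output-strict NI bound. -/
theorem robust_stability_implies_osni_bound {n : ℕ} (C : Matrix (Fin n) (Fin n) (RatFunc ℝ)) (hC : MemRHinf C)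
    (hrob : ∀ P : Matrix (Fin n) (Fin n) (RatFunc ℝ), IsNI P → StrictlyProper P → NoDoubleOriginPole P →
      FeedbackStable P C) :
    ∀ ω : ℝ, 0 < ω → ∃ ε : ℝ, 0 < ε ∧
      (Complex.I • (evalM C (jw ω) - (evalM C (jw ω))ᴴ) -
        (ε : ℂ) • ((evalM C (jw ω))ᴴ * evalM C (jw ω))).PosSemidef := by
  intro ω hω
  apply exists_eps
  intro x hx
  by_contra hneg
  push Not at hneg
  have hCp : ¬ HasPole C (jw ω) := by
    rintro ⟨i, j, hij⟩
    exact hC.2 _ (jw_re ω).ge i j hij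
  obtain ⟨P, h1, h2, h3, h4, h5⟩ := exists_plant hω x (evalM C (jw ω) *ᵥ x) hx (by
    rw [star_dotProduct]
    simpa using hneg)
  have h0 := loop_nonsingular (jw_re ω).ge h4 hCp (hrob P h1 h2 h3) x h5
  exact hx (by rw [h0, mulVec_zero])

end NIControl
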